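/- (Theorem 4, optimality part) Let Q̄* := Q̄*_{N,k;μ} be the unique fixed point of the soft (N,k)-pessimistic Bellman operator B̄*_{N,k;μ}, and define the policy π̄*(a|s) = μ(a|s)·exp(Q̄*(s,a)/α) / (Σ_b μ(b|s)·exp(Q̄*(s,b)/α)). Then: (i) the fixed point of the regularized evaluation operator for π̄* equals Q̄*, i.e., Q̄^{π̄*}_{N,k;μ} = Q̄*; (ii) for every policy π', Q̄^{π'}_{N,k;μ}(s,a) ≤ Q̄*(s,a) for all (s,a); and hence (iii) for every probability mass function ρ0 on S, π̄* maximizes J̄(π;μ) := Σ_s ρ0(s)·( Σ_a π(a|s)·Q̄^π_{N,k;μ}(s,a) − α·KL(π(·|s)‖μ(·|s)) ) over all policies π. -/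

import Mathlib

/-- `kmin x k` is the entry in position `k` (0-indexed) of a monotone nondecreasing
sorted arrangement of the tuple `x`, i.e. the `(k+1)`-th smallest entry counted with
multiplicity. -/
noncomputable def kmin {N : ℕ} (x : Fin N → ℝ) (k : Fin N) : ℝ := x (Tuple.sort x k)

/-- A probability mass function on a finite type: nonnegative and summing to one. -/
def IsPMF {α : Type*} [Fintype α] (p : α → ℝ) : Prop :=
  (∀ a, 0 ≤ p a) ∧ ∑ a, p a = 1

/-- Sup norm `‖Q‖_∞ = max_{(s,a)} |Q(s,a)|` on `S × A → ℝ` (curried). -/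
noncomputable def supNorm {S A : Type*} [Fintype S] [Fintype A] [Nonempty S] [Nonempty A]
    (Q : S → A → ℝ) : ℝ :=
  Finset.univ.sup' Finset.univ_nonempty (fun p : S × A => |Q p.1 p.2|)

/-- The `(N,k)`-pessimistic Bellman operator (with `k` given 0-indexed as `k : Fin N`):
`(B^π_{N,k} Q)(s,a) = r(s,a) + γ · Σ_{v : Fin N → ι} (Π_j P(v_j)) ·
  kmin_k( j ↦ Σ_{s'} M(v_j)(s,a)(s') · Σ_{a'} π(a'|s') · Q(s',a') )`. -/
noncomputable def pessBellman {S A ι : Type*} [Fintype S] [Fintype A] [Fintype ι]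
    (r : S → A → ℝ) (γ : ℝ) (P : ι → ℝ) (M : ι → S → A → S → ℝ)
    (π : S → A → ℝ) (N : ℕ) (k : Fin N) (Q : S → A → ℝ) : S → A → ℝ :=
  fun s a => r s a + γ * ∑ v : Fin N → ι, (∏ j, P (v j)) *
    kmin (fun j => ∑ s', M (v j) s a s' * ∑ a', π s' a' * Q s' a') k

/-- Kullback–Leibler divergence `KL(p‖q) = Σ_a p(a)·log(p(a)/q(a))` on a finite type
(with the convention `0·log 0 = 0`, automatic here). -/
noncomputable def KLdiv {α : Type*} [Fintype α] (p q : α → ℝ) : ℝ :=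
  ∑ a, p a * Real.log (p a / q a)

/-- The soft `(N,k)`-pessimistic Bellman operator with reference policy `μ` and
coefficient `α` (with `k` given 0-indexed as `k : Fin N`):
`(B̄*_{N,k;μ} Q)(s,a) = r(s,a) + γ · Σ_{v} (Π_j P(v_j)) ·
  kmin_k( j ↦ Σ_{s'} M(v_j)(s,a)(s') · α·log Σ_{a'} μ(a'|s')·exp(Q(s',a')/α) )`. -/
noncomputable def softBellman {S A ι : Type*} [Fintype S] [Fintype A] [Fintype ι]
    (r : S → A → ℝ) (γ : ℝ) (P : ι → ℝ) (M : ι → S → A → S → ℝ)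
    (μ : S → A → ℝ) (α : ℝ) (N : ℕ) (k : Fin N) (Q : S → A → ℝ) : S → A → ℝ :=
  fun s a => r s a + γ * ∑ v : Fin N → ι, (∏ j, P (v j)) *
    kmin (fun j => ∑ s', M (v j) s a s' *
      (α * Real.log (∑ a', μ s' a' * Real.exp (Q s' a' / α)))) k

/-- The regularized `(N,k)`-pessimistic evaluation operator for policy `π`, reference
policy `μ` and coefficient `α` (with `k` given 0-indexed as `k : Fin N`):
`(B̄^π_{N,k;μ} Q)(s,a) = r(s,a) + γ · Σ_{v} (Π_j P(v_j)) ·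
  kmin_k( j ↦ Σ_{s'} M(v_j)(s,a)(s') · (Σ_{a'} π(a'|s')·Q(s',a') − α·KL(π(·|s')‖μ(·|s'))) )`. -/
noncomputable def regBellman {S A ι : Type*} [Fintype S] [Fintype A] [Fintype ι]
    (r : S → A → ℝ) (γ : ℝ) (P : ι → ℝ) (M : ι → S → A → S → ℝ)
    (π μ : S → A → ℝ) (α : ℝ) (N : ℕ) (k : Fin N) (Q : S → A → ℝ) : S → A → ℝ :=
  fun s a => r s a + γ * ∑ v : Fin N → ι, (∏ j, P (v j)) *
    kmin (fun j => ∑ s', M (v j) s a s' *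
      ((∑ a', π s' a' * Q s' a') - α * KLdiv (π s') (μ s'))) k

/-!
By the Gibbs variational principle, the soft value `α log ∑ μ exp (q / α)` exceeds the
KL-regularized value of any distribution `p` by exactly `α KL(p ‖ g)`, where `g ∝ μ exp (q / α)`.
So the soft Bellman operator dominates every regularized evaluation operator, and it agrees at
`Q̄*` with the evaluation operator of `π̄*`. All these operators are monotone and discount additive
constants by `γ < 1`, since averages and order statistics are monotone and commute with adding
constants. Such an operator has a comparison principle: `Q ≤ T Q` and `T R ≤ R` imply `Q ≤ R`.
Applied to the soft operator it bounds the fixed point of any policy by `Q̄*`; applied twice to the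
evaluation operator of `π̄*` it identifies that operator's fixed point with `Q̄*`.
-/

open Finset

namespace IsPMF

variable {α : Type*} [Fintype α] {p : α → ℝ}

lemma sum_mul_le_sum_mul_add (hp : IsPMF p) {f g : α → ℝ} {c : ℝ} (h : ∀ a, f a ≤ g a + c) :
    ∑ a, p a * f a ≤ ∑ a, p a * g a + c :=
  calc ∑ a, p a * f a ≤ ∑ a, p a * (g a + c) :=
        sum_le_sum fun a _ => mul_le_mul_of_nonneg_left (h a) (hp.1 a)
    _ = ∑ a, p a * g a + c := by
        simp only [mul_add, sum_add_distrib, ← sum_mul, hp.2, one_mul]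

lemma pi {J : Type*} [Fintype J] [DecidableEq J] {β : J → Type*} [∀ j, Fintype (β j)]
    {p : ∀ j, β j → ℝ} (hp : ∀ j, IsPMF (p j)) : IsPMF fun v : ∀ j, β j => ∏ j, p j (v j) :=
  ⟨fun v => prod_nonneg fun j _ => (hp j).1 (v j), by
    rw [← Fintype.prod_sum, prod_congr rfl fun j _ => (hp j).2, prod_const_one]⟩

end IsPMF

section OrderStatistic

variable {N : ℕ}

lemma kmin_le_iff (x : Fin N → ℝ) (k : Fin N) (c : ℝ) :
    kmin x k ≤ c ↔ (k : ℕ) < #{j | x j ≤ c} := by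
  have hperm : #{j | (x ∘ Tuple.sort x) j ≤ c} = #{j | x j ≤ c} :=
    card_equiv (Tuple.sort x) (by simp)
  rw [← hperm]
  exact (Tuple.lt_card_le_iff_apply_le_of_monotone (Tuple.monotone_sort x)).symm

lemma kmin_le_kmin_add {x y : Fin N → ℝ} {c : ℝ} (h : ∀ j, x j ≤ y j + c) (k : Fin N) :
    kmin x k ≤ kmin y k + c := by
  have hcard : #{j | y j ≤ kmin y k} ≤ #{j | x j ≤ kmin y k + c} :=
    card_le_card (monotone_filter_right _ fun j _ hj => (h j).trans (by gcongr))
  exact (kmin_le_iff x k _).2 (((kmin_le_iff y k _).1 le_rfl).trans_le hcard)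

end OrderStatistic

section GibbsVariationalPrinciple

variable {A : Type*} [Fintype A] {p μ : A → ℝ} {α : ℝ}

lemma KLdiv_self (p : A → ℝ) : KLdiv p p = 0 :=
  sum_eq_zero fun a _ => by by_cases h : p a = 0 <;> simp [h]

lemma KLdiv_nonneg {q : A → ℝ} (hp : IsPMF p) (hq : IsPMF q) (hqpos : ∀ a, 0 < q a) :
    0 ≤ KLdiv p q := by
  have hterm (a : A) : p a * Real.log (p a / q a) =
      q a * InformationTheory.klFun (p a / q a) + (p a - q a) := by
    have := (hqpos a).ne'
    rw [InformationTheory.klFun_apply]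
    field_simp
    ring
  have hsum : KLdiv p q = ∑ a, q a * InformationTheory.klFun (p a / q a) := by
    simp only [KLdiv, hterm, sum_add_distrib, sum_sub_distrib, hp.2, hq.2, sub_self, add_zero]
  rw [hsum]
  exact sum_nonneg fun a _ => mul_nonneg (hq.1 a)
    (InformationTheory.klFun_nonneg (div_nonneg (hp.1 a) (hq.1 a)))

/-- The soft (log-sum-exp) value of the action values `q`: the state value inside the soft
Bellman operator. -/
noncomputable def softValue (μ : A → ℝ) (α : ℝ) (q : A → ℝ) : ℝ :=
  α * Real.log (∑ a, μ a * Real.exp (q a / α))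

/-- The KL-regularized value of playing `p` against the action values `q`: the state value inside
the regularized evaluation operator. -/
noncomputable def regValue (p μ : A → ℝ) (α : ℝ) (q : A → ℝ) : ℝ :=
  (∑ a, p a * q a) - α * KLdiv p μ

/-- The Gibbs distribution with reference weights `μ`, energy `-q` and temperature `α`: the policy
that is optimal against the action values `q`. -/
noncomputable def gibbs (μ : A → ℝ) (α : ℝ) (q : A → ℝ) (a : A) : ℝ :=
  μ a * Real.exp (q a / α) / ∑ b, μ b * Real.exp (q b / α)

lemma regValue_le_regValue_add (hp : IsPMF p) {q q' : A → ℝ} {c : ℝ}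
    (h : ∀ a, q a ≤ q' a + c) : regValue p μ α q ≤ regValue p μ α q' + c := by
  rw [regValue, regValue, sub_add_eq_add_sub]
  exact sub_le_sub_right (hp.sum_mul_le_sum_mul_add h) _

variable [Nonempty A]

lemma sum_mul_exp_pos (hμ : ∀ a, 0 < μ a) (f : A → ℝ) : 0 < ∑ a, μ a * Real.exp (f a) :=
  sum_pos (fun a _ => mul_pos (hμ a) (Real.exp_pos _)) univ_nonempty

lemma gibbs_pos (hμ : ∀ a, 0 < μ a) (q : A → ℝ) (a : A) : 0 < gibbs μ α q a :=
  div_pos (mul_pos (hμ a) (Real.exp_pos _)) (sum_mul_exp_pos hμ _)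

lemma isPMF_gibbs (hμ : ∀ a, 0 < μ a) (q : A → ℝ) : IsPMF (gibbs μ α q) := by
  refine ⟨fun a => (gibbs_pos hμ q a).le, ?_⟩
  simp only [gibbs, ← sum_div]
  exact div_self (sum_mul_exp_pos hμ _).ne'

lemma regValue_add_KLdiv_gibbs (hμ : ∀ a, 0 < μ a) (hα : α ≠ 0) (hp : ∑ a, p a = 1) (q : A → ℝ) :
    regValue p μ α q + α * KLdiv p (gibbs μ α q) = softValue μ α q := by
  set Z := ∑ b, μ b * Real.exp (q b / α) with hZ
  have hterm (a : A) : p a * Real.log (p a / gibbs μ α q a) =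
      p a * Real.log (p a / μ a) - p a * q a / α + p a * Real.log Z := by
    obtain hpa | hpa := eq_or_ne (p a) 0
    · simp [hpa]
    have hμa := (hμ a).ne'
    have hZ0 : Z ≠ 0 := (sum_mul_exp_pos hμ _).ne'
    rw [gibbs, ← hZ, Real.log_div hpa (by positivity), Real.log_div (by positivity) hZ0,
      Real.log_mul hμa (Real.exp_ne_zero _), Real.log_exp, Real.log_div hpa hμa]
    ring
  have hKL : KLdiv p (gibbs μ α q) = KLdiv p μ - (∑ a, p a * q a) / α + Real.log Z := by
    simp only [KLdiv, hterm, sum_add_distrib, sum_sub_distrib, ← sum_mul, ← sum_div, hp, one_mul]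
  rw [regValue, softValue, hKL]
  field_simp
  ring

lemma regValue_le_softValue (hμ : ∀ a, 0 < μ a) (hα : 0 < α) (hp : IsPMF p) (q : A → ℝ) :
    regValue p μ α q ≤ softValue μ α q := by
  rw [← regValue_add_KLdiv_gibbs hμ hα.ne' hp.2 q]
  exact le_add_of_nonneg_right
    (mul_nonneg hα.le (KLdiv_nonneg hp (isPMF_gibbs hμ q) (gibbs_pos hμ q)))

lemma regValue_gibbs (hμ : ∀ a, 0 < μ a) (hα : α ≠ 0) (q : A → ℝ) :
    regValue (gibbs μ α q) μ α q = softValue μ α q := by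
  rw [← regValue_add_KLdiv_gibbs hμ hα (isPMF_gibbs hμ q).2 q, KLdiv_self, mul_zero, add_zero]

lemma softValue_le_softValue_add (hμ : ∀ a, 0 < μ a) (hα : 0 < α) {q q' : A → ℝ} {c : ℝ}
    (h : ∀ a, q a ≤ q' a + c) : softValue μ α q ≤ softValue μ α q' + c :=
  calc softValue μ α q = regValue (gibbs μ α q) μ α q := (regValue_gibbs hμ hα.ne' q).symm
    _ ≤ regValue (gibbs μ α q) μ α q' + c := regValue_le_regValue_add (isPMF_gibbs hμ q) h
    _ ≤ softValue μ α q' + c := by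
        gcongr
        exact regValue_le_softValue hμ hα (isPMF_gibbs hμ q) q'

lemma softValue_mono (hμ : ∀ a, 0 < μ a) (hα : 0 < α) : Monotone (softValue μ α) :=
  fun q q' h => by
    simpa using softValue_le_softValue_add hμ hα (c := 0) (by simpa using fun a => h a)

end GibbsVariationalPrinciple

/-- Blackwell's monotonicity and discounting conditions for an operator on action-value functions,
combined into a single inequality. -/
def IsBlackwell {S A : Type*} (γ : ℝ) (T : (S → A → ℝ) → S → A → ℝ) : Prop :=
  ∀ ⦃Q R : S → A → ℝ⦄ ⦃c : ℝ⦄, (∀ s a, Q s a ≤ R s a + c) → ∀ s a, T Q s a ≤ T R s a + γ * c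

namespace IsBlackwell

variable {S A : Type*} [Finite S] [Finite A] {γ : ℝ} {T : (S → A → ℝ) → S → A → ℝ}
  {Q R : S → A → ℝ}

lemma le_of_le_apply_of_apply_le (hT : IsBlackwell γ T) (hγ : γ < 1) (hQ : Q ≤ T Q)
    (hR : T R ≤ R) : Q ≤ R := by
  intro s a
  have : Nonempty (S × A) := ⟨(s, a)⟩
  obtain ⟨⟨s₀, a₀⟩, hmax⟩ := Finite.exists_max fun x : S × A => Q x.1 x.2 - R x.1 x.2
  set c := Q s₀ a₀ - R s₀ a₀
  have hle : ∀ s a, Q s a ≤ R s a + c := fun s a => sub_le_iff_le_add'.1 (hmax (s, a))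
  have hcγ : c ≤ γ * c := by linarith [hQ s₀ a₀, hT hle s₀ a₀, hR s₀ a₀]
  have hc0 : c ≤ 0 := by nlinarith
  linarith [hle s a]

lemma eq_of_apply_eq_self (hT : IsBlackwell γ T) (hγ : γ < 1) (hQ : T Q = Q) (hR : T R = R) :
    Q = R :=
  le_antisymm (hT.le_of_le_apply_of_apply_le hγ hQ.ge hR.le)
    (hT.le_of_le_apply_of_apply_le hγ hR.ge hQ.le)

end IsBlackwell

section Backup

variable {S A ι : Type*} [Fintype S] [Fintype ι] {γ : ℝ} {P : ι → ℝ} {M : ι → S → A → S → ℝ}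
  {N : ℕ} {V W : S → ℝ}

/-- The `(N,k)`-pessimistic one-step backup of a state-value function `V`. Both Bellman operators
are this backup applied to a state value computed from `Q`. -/
noncomputable def pessBackup (r : S → A → ℝ) (γ : ℝ) (P : ι → ℝ) (M : ι → S → A → S → ℝ)
    (N : ℕ) (k : Fin N) (V : S → ℝ) : S → A → ℝ :=
  fun s a => r s a + γ * ∑ v : Fin N → ι, (∏ j, P (v j)) *
    kmin (fun j => ∑ s', M (v j) s a s' * V s') k

lemma pessBackup_le_pessBackup_add (r : S → A → ℝ) (hγ : 0 ≤ γ) (hP : IsPMF P)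
    (hM : ∀ i s a, IsPMF (M i s a)) (k : Fin N) {c : ℝ} (h : ∀ s, V s ≤ W s + c) (s : S) (a : A) :
    pessBackup r γ P M N k V s a ≤ pessBackup r γ P M N k W s a + γ * c := by
  rw [pessBackup, pessBackup, add_assoc, ← mul_add]
  gcongr
  exact (IsPMF.pi fun _ => hP).sum_mul_le_sum_mul_add fun v =>
    kmin_le_kmin_add (fun j => (hM (v j) s a).sum_mul_le_sum_mul_add h) k

lemma pessBackup_mono (r : S → A → ℝ) (hγ : 0 ≤ γ) (hP : IsPMF P)
    (hM : ∀ i s a, IsPMF (M i s a)) (k : Fin N) : Monotone (pessBackup r γ P M N k) :=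
  fun V W hVW s a => by
    simpa using pessBackup_le_pessBackup_add r hγ hP hM k (c := 0)
      (by simpa using fun s => hVW s) s a

end Backup

section BellmanOperators

variable {S A ι : Type*} [Fintype S] [Fintype A] [Fintype ι] {γ : ℝ} {P : ι → ℝ}
  {M : ι → S → A → S → ℝ} {π μ : S → A → ℝ} {α : ℝ} {N : ℕ}

lemma softBellman_eq_pessBackup (r : S → A → ℝ) (γ : ℝ) (P : ι → ℝ) (M : ι → S → A → S → ℝ)
    (μ : S → A → ℝ) (α : ℝ) (k : Fin N) (Q : S → A → ℝ) :
    softBellman r γ P M μ α N k Q = pessBackup r γ P M N k fun s => softValue (μ s) α (Q s) :=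
  rfl

lemma regBellman_eq_pessBackup (r : S → A → ℝ) (γ : ℝ) (P : ι → ℝ) (M : ι → S → A → S → ℝ)
    (π μ : S → A → ℝ) (α : ℝ) (k : Fin N) (Q : S → A → ℝ) :
    regBellman r γ P M π μ α N k Q = pessBackup r γ P M N k fun s => regValue (π s) (μ s) α (Q s) :=
  rfl

lemma isBlackwell_regBellman (r : S → A → ℝ) (hγ : 0 ≤ γ) (hP : IsPMF P)
    (hM : ∀ i s a, IsPMF (M i s a)) (hπ : ∀ s, IsPMF (π s)) (k : Fin N) :
    IsBlackwell γ (regBellman r γ P M π μ α N k) := fun _ _ _ h =>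
  pessBackup_le_pessBackup_add r hγ hP hM k fun s => regValue_le_regValue_add (hπ s) (h s)

variable [Nonempty A]

lemma isBlackwell_softBellman (r : S → A → ℝ) (hγ : 0 ≤ γ) (hP : IsPMF P)
    (hM : ∀ i s a, IsPMF (M i s a)) (hμ : ∀ s a, 0 < μ s a) (hα : 0 < α) (k : Fin N) :
    IsBlackwell γ (softBellman r γ P M μ α N k) := fun _ _ _ h =>
  pessBackup_le_pessBackup_add r hγ hP hM k fun s => softValue_le_softValue_add (hμ s) hα (h s)

lemma regBellman_le_softBellman (r : S → A → ℝ) (hγ : 0 ≤ γ) (hP : IsPMF P)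
    (hM : ∀ i s a, IsPMF (M i s a)) (hπ : ∀ s, IsPMF (π s)) (hμ : ∀ s a, 0 < μ s a) (hα : 0 < α)
    (k : Fin N) (Q : S → A → ℝ) :
    regBellman r γ P M π μ α N k Q ≤ softBellman r γ P M μ α N k Q :=
  pessBackup_mono r hγ hP hM k fun s => regValue_le_softValue (hμ s) hα (hπ s) (Q s)

lemma regBellman_gibbs (r : S → A → ℝ) (γ : ℝ) (P : ι → ℝ) (M : ι → S → A → S → ℝ)
    (hμ : ∀ s a, 0 < μ s a) (hα : α ≠ 0) (k : Fin N) (Q : S → A → ℝ) :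
    regBellman r γ P M (fun s => gibbs (μ s) α (Q s)) μ α N k Q =
      softBellman r γ P M μ α N k Q := by
  simp only [regBellman_eq_pessBackup, softBellman_eq_pessBackup, regValue_gibbs (hμ _) hα]

/-- Taking `μ = 1` gives maximum-entropy regularization. -/
theorem softBellman_optimal_policy_general (r : S → A → ℝ) (hγ0 : 0 ≤ γ) (hγ1 : γ < 1)
    (hμ : ∀ s a, 0 < μ s a) (hα : 0 < α) (hP : IsPMF P) (hM : ∀ i s a, IsPMF (M i s a))
    (k : Fin N) {Qstar : S → A → ℝ} (hQstar : softBellman r γ P M μ α N k Qstar = Qstar) :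
    let πstar := fun s => gibbs (μ s) α (Qstar s)
    (∀ Q, regBellman r γ P M πstar μ α N k Q = Q ↔ Q = Qstar) ∧
    (∀ π : S → A → ℝ, (∀ s, IsPMF (π s)) →
      ∀ Q, regBellman r γ P M π μ α N k Q = Q → ∀ s a, Q s a ≤ Qstar s a) ∧
    (∀ ρ : S → ℝ, (∀ s, 0 ≤ ρ s) → ∀ π : S → A → ℝ, (∀ s, IsPMF (π s)) →
      ∀ Qπ, regBellman r γ P M π μ α N k Qπ = Qπ →
      ∀ Qπstar, regBellman r γ P M πstar μ α N k Qπstar = Qπstar →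
        ∑ s, ρ s * regValue (π s) (μ s) α (Qπ s) ≤
          ∑ s, ρ s * regValue (πstar s) (μ s) α (Qπstar s)) := by
  intro πstar
  have hfix : regBellman r γ P M πstar μ α N k Qstar = Qstar :=
    (regBellman_gibbs r γ P M hμ hα.ne' k Qstar).trans hQstar
  have huniq (Q) (hQ : regBellman r γ P M πstar μ α N k Q = Q) : Q = Qstar :=
    (isBlackwell_regBellman r hγ0 hP hM (fun s => isPMF_gibbs (hμ s) _) k).eq_of_apply_eq_self
      hγ1 hQ hfix
  have hdom (π : S → A → ℝ) (hπ : ∀ s, IsPMF (π s)) (Q)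
      (hQ : regBellman r γ P M π μ α N k Q = Q) : Q ≤ Qstar :=
    (isBlackwell_softBellman r hγ0 hP hM hμ hα k).le_of_le_apply_of_apply_le hγ1
      (hQ.ge.trans (regBellman_le_softBellman r hγ0 hP hM hπ hμ hα k Q)) hQstar.le
  refine ⟨fun Q => ⟨huniq Q, fun h => h ▸ hfix⟩, hdom, fun ρ hρ π hπ Qπ hQπ Qπstar hQπstar => ?_⟩
  rw [huniq Qπstar hQπstar]
  refine sum_le_sum fun s _ => mul_le_mul_of_nonneg_left ?_ (hρ s)
  calc regValue (π s) (μ s) α (Qπ s) ≤ softValue (μ s) α (Qπ s) :=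
        regValue_le_softValue (hμ s) hα (hπ s) _
    _ ≤ softValue (μ s) α (Qstar s) :=
        softValue_mono (hμ s) hα (hdom π hπ Qπ hQπ s)
    _ = regValue (πstar s) (μ s) α (Qstar s) := (regValue_gibbs (hμ s) hα.ne' _).symm

end BellmanOperators

/-- Theorem 4, optimality part.  Let `Q̄*` be the unique fixed point of the soft
`(N,k)`-pessimistic Bellman operator `B̄*_{N,k;μ}` and let
`π̄*(a|s) = μ(a|s)·exp(Q̄*(s,a)/α) / Σ_b μ(b|s)·exp(Q̄*(s,b)/α)`.  Then:
(i) the fixed point of the regularized evaluation operator for `π̄*` equals `Q̄*`;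
(ii) for every policy `π'` the fixed point `Q̄^{π'}` satisfies `Q̄^{π'} ≤ Q̄*` pointwise;
(iii) for every initial distribution `ρ0`, `π̄*` maximizes the regularized return
`J̄(π;μ) = Σ_s ρ0(s)·(Σ_a π(a|s)·Q̄^π(s,a) − α·KL(π(·|s)‖μ(·|s)))` over all policies. -/
theorem softBellman_optimal_policy {S A ι : Type*} [Fintype S] [Fintype A] [Fintype ι]
    [Nonempty S] [Nonempty A] [Nonempty ι]
    (r : S → A → ℝ) (γ : ℝ) (hγ0 : 0 ≤ γ) (hγ1 : γ < 1)
    (μ : S → A → ℝ) (hμ : ∀ s, IsPMF (μ s)) (hμpos : ∀ s a, 0 < μ s a)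
    (α : ℝ) (hα : 0 < α)
    (P : ι → ℝ) (hP : IsPMF P)
    (M : ι → S → A → S → ℝ) (hM : ∀ v s a, IsPMF (M v s a))
    (N : ℕ) (hN : 1 ≤ N) (k : ℕ) (hk1 : 1 ≤ k) (hkN : k ≤ N)
    (Qstar : S → A → ℝ)
    (hQstar : softBellman r γ P M μ α N ⟨k - 1, by omega⟩ Qstar = Qstar)
    (πstar : S → A → ℝ)
    (hπstar : ∀ s a, πstar s a
      = μ s a * Real.exp (Qstar s a / α) / ∑ b, μ s b * Real.exp (Qstar s b / α)) :
    -- (i) the regularized evaluation fixed point for `π̄*` equals `Q̄*`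
    (∀ Qps : S → A → ℝ,
      regBellman r γ P M πstar μ α N ⟨k - 1, by omega⟩ Qps = Qps → Qps = Qstar) ∧
    -- (ii) domination of every policy's regularized fixed point
    (∀ π' : S → A → ℝ, (∀ s, IsPMF (π' s)) →
      ∀ Qp' : S → A → ℝ,
        regBellman r γ P M π' μ α N ⟨k - 1, by omega⟩ Qp' = Qp' →
        ∀ s a, Qp' s a ≤ Qstar s a) ∧
    -- (iii) `π̄*` maximizes the regularized return `J̄(π;μ)`
    (∀ ρ0 : S → ℝ, IsPMF ρ0 →
      ∀ π : S → A → ℝ, (∀ s, IsPMF (π s)) →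
      ∀ Qπ : S → A → ℝ,
        regBellman r γ P M π μ α N ⟨k - 1, by omega⟩ Qπ = Qπ →
      ∀ Qπstar : S → A → ℝ,
        regBellman r γ P M πstar μ α N ⟨k - 1, by omega⟩ Qπstar = Qπstar →
        ∑ s, ρ0 s * ((∑ a, π s a * Qπ s a) - α * KLdiv (π s) (μ s))
          ≤ ∑ s, ρ0 s * ((∑ a, πstar s a * Qπstar s a) - α * KLdiv (πstar s) (μ s))) := by
  obtain rfl : πstar = fun s => gibbs (μ s) α (Qstar s) := funext₂ hπstar
  have h := softBellman_optimal_policy_general r hγ0 hγ1 hμpos hα hP hM _ hQstar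
  exact ⟨fun Q => (h.1 Q).1, h.2.1, fun ρ0 hρ0 => h.2.2 ρ0 hρ0.1⟩
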